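/- arXiv:1805.09965 — 7 statements merged into one kernel-verified Lean document; each statement's English description precedes it below -/
import Mathlib

section
/- Let f : E → ℝ be differentiable and L-smooth. Let θ, e ∈ E, let α > 0, and set θ⁺ := θ − α(∇f(θ) + e). Then f(θ⁺) − f(θ) ≤ −(α/2)‖∇f(θ)‖² + (α/2)‖e‖² + (L/2 − 1/(2α))‖θ⁺ − θ‖². -/
open Finset

/-- The quadratic upper bound for functions with Lipschitz gradient. -/
lemma smooth_quadratic_bound {n : ℕ}
    (f : EuclideanSpace ℝ (Fin n) → ℝ) (L : ℝ)
    (hf : Differentiable ℝ f)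
    (hL : ∀ x y, ‖gradient f x - gradient f y‖ ≤ L * ‖x - y‖)
    (x d : EuclideanSpace ℝ (Fin n)) :
    f (x + d) ≤ f x + inner ℝ (gradient f x) d + L / 2 * ‖d‖ ^ 2 := by
  have hder : ∀ t : ℝ, HasDerivAt
      (fun t : ℝ => f (x + t • d) - t * inner ℝ (gradient f x) d - L / 2 * ‖d‖ ^ 2 * t ^ 2)
      (inner ℝ (gradient f (x + t • d)) d - inner ℝ (gradient f x) d - L * ‖d‖ ^ 2 * t) t := by
    intro t
    have h1 : HasDerivAt (fun t : ℝ => x + t • d) d t := by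
      simpa using ((hasDerivAt_id t).smul_const d).const_add x
    have h2 := ((hf (x + t • d)).hasGradientAt.hasFDerivAt).comp_hasDerivAt t h1
    rw [InnerProductSpace.toDual_apply_apply] at h2
    have h3 := (hasDerivAt_id t).mul_const (inner ℝ (gradient f x) d : ℝ)
    have h4 := (hasDerivAt_pow 2 t).const_mul (L / 2 * ‖d‖ ^ 2)
    refine HasDerivAt.congr_deriv ((h2.sub h3).sub h4) ?_
    push_cast
    ring
  have hanti := antitoneOn_of_deriv_nonpos (convex_Icc (0 : ℝ) 1)
    (fun t _ => (hder t).continuousAt.continuousWithinAt)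
    (fun t _ => (hder t).differentiableAt.differentiableWithinAt)
    (by
      intro t ht
      rw [interior_Icc] at ht
      rw [(hder t).deriv, ← inner_sub_left]
      have h1 := real_inner_le_norm (gradient f (x + t • d) - gradient f x) d
      have h2 := hL (x + t • d) x
      rw [add_sub_cancel_left, norm_smul, Real.norm_of_nonneg ht.1.le] at h2
      have h3 := mul_le_mul_of_nonneg_right h2 (norm_nonneg d)
      nlinarith)
  have h := hanti (Set.left_mem_Icc.2 zero_le_one) (Set.right_mem_Icc.2 zero_le_one) zero_le_one
  simp only [one_smul, zero_smul, add_zero] at h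
  linarith

/-- LAG descent lemma (Lemma 2): one LAG step equals a gradient step perturbed
by the aggregated staleness error `e`. -/
theorem lag_descent_in_objective {n : ℕ}
    (f : EuclideanSpace ℝ (Fin n) → ℝ) (L : ℝ)
    (hf : Differentiable ℝ f)
    (hL : ∀ x y, ‖gradient f x - gradient f y‖ ≤ L * ‖x - y‖)
    (θ e : EuclideanSpace ℝ (Fin n)) (α : ℝ) (hα : 0 < α)
    (θp : EuclideanSpace ℝ (Fin n))
    (hθp : θp = θ - α • (gradient f θ + e)) :
    f θp - f θ ≤ -(α / 2) * ‖gradient f θ‖ ^ 2 + (α / 2) * ‖e‖ ^ 2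
      + (L / 2 - 1 / (2 * α)) * ‖θp - θ‖ ^ 2 := by
  have h := smooth_quadratic_bound f L hf hL θ (θp - θ)
  rw [add_sub_cancel] at h
  have hd : θp - θ = -(α • (gradient f θ + e)) := by rw [hθp]; abel
  have hi : inner ℝ (gradient f θ) (θp - θ)
      = -(α * (‖gradient f θ‖ ^ 2 + inner ℝ (gradient f θ) e)) := by
    rw [hd, inner_neg_right, inner_smul_right, inner_add_right, real_inner_self_eq_norm_sq]
  have hn : ‖θp - θ‖ ^ 2
      = α ^ 2 * (‖gradient f θ‖ ^ 2 + 2 * inner ℝ (gradient f θ) e + ‖e‖ ^ 2) := by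
    rw [hd, norm_neg, norm_smul, mul_pow, norm_add_sq_real, Real.norm_of_nonneg hα.le]
  have hq : 1 / (2 * α) * ‖θp - θ‖ ^ 2
      = α / 2 * (‖gradient f θ‖ ^ 2 + 2 * inner ℝ (gradient f θ) e + ‖e‖ ^ 2) := by
    rw [hn]; field_simp
  rw [sub_mul, hq]
  rw [hi] at h
  linarith
end

section
/- Assume the LAG setup with 0 < α ≤ 1/L and β_1 = (1 − αL)/(2α). Then for every k ≥ 1, V^{k+1} − V^k ≤ −(α/2)‖∇𝓛(θ^k)‖² − Σ_{d=1}^D (β_d − β_{d+1} − ξ_d/(2α)) ‖θ^{k+1−d} − θ^{k−d}‖². In particular, if in addition ξ_d ≤ 2α(β_d − β_{d+1}) for every d = 1, …, D, then V^{k+1} ≤ V^k for every k ≥ 1. -/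
open Finset

lemma aux_descent {n : ℕ} (f : EuclideanSpace ℝ (Fin n) → ℝ) (hf : Differentiable ℝ f)
    (L : ℝ) (hs : ∀ x y, ‖gradient f x - gradient f y‖ ≤ L * ‖x - y‖)
    (x v : EuclideanSpace ℝ (Fin n)) :
    f (x + v) ≤ f x + inner ℝ (gradient f x) v + L / 2 * ‖v‖ ^ 2 := by
  have hd : ∀ t : ℝ, HasDerivAt (fun t : ℝ => f (x + t • v) - t * inner ℝ (gradient f x) v
      - L / 2 * ‖v‖ ^ 2 * t ^ 2)
      (inner ℝ (gradient f (x + t • v)) v - inner ℝ (gradient f x) v - L * ‖v‖ ^ 2 * t) t := by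
    intro t
    have h1 : HasDerivAt (fun t : ℝ => x + t • v) v t := by
      simpa using ((hasDerivAt_id t).smul_const v).const_add x
    have h2 := (hf (x + t • v)).hasGradientAt.hasFDerivAt.comp_hasDerivAt t h1
    have h3 := (h2.sub ((hasDerivAt_id t).mul_const (inner ℝ (gradient f x) v))).sub
      ((hasDerivAt_pow 2 t).const_mul (L / 2 * ‖v‖ ^ 2))
    refine h3.congr_deriv ?_
    rw [InnerProductSpace.toDual_apply_apply]
    norm_num
    ring
  have hanti : AntitoneOn (fun t : ℝ => f (x + t • v) - t * inner ℝ (gradient f x) v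
      - L / 2 * ‖v‖ ^ 2 * t ^ 2) (Set.Icc 0 1) := by
    apply antitoneOn_of_deriv_nonpos (convex_Icc 0 1)
    · exact fun t _ => (hd t).continuousAt.continuousWithinAt
    · exact fun t _ => (hd t).differentiableAt.differentiableWithinAt
    · intro t ht
      rw [interior_Icc] at ht
      rw [(hd t).deriv, ← inner_sub_left]
      have h1 := real_inner_le_norm (gradient f (x + t • v) - gradient f x) v
      have h2 := hs (x + t • v) x
      rw [add_sub_cancel_left, norm_smul, Real.norm_of_nonneg ht.1.le] at h2
      have h3 := mul_le_mul_of_nonneg_right h2 (norm_nonneg v)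
      nlinarith
  have := hanti (Set.left_mem_Icc.2 zero_le_one) (Set.right_mem_Icc.2 zero_le_one) zero_le_one
  simp only [one_smul, zero_smul, add_zero, one_mul, zero_mul, sub_zero, one_pow, mul_one,
    ne_eq, OfNat.ofNat_ne_zero, not_false_eq_true, zero_pow, mul_zero] at this
  linarith

lemma aux_shift (D : ℕ) (β a : ℕ → ℝ) :
    ∑ d ∈ Finset.Icc 1 D, β d * a (d - 1) + β (D + 1) * a D
      = β 1 * a 0 + ∑ d ∈ Finset.Icc 1 D, β (d + 1) * a d := by
  induction D with
  | zero => simp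
  | succ D ih =>
    rw [Finset.sum_Icc_succ_top (by omega), Finset.sum_Icc_succ_top (by omega)]
    simp only [Nat.add_sub_cancel]
    linarith

lemma aux_err {E : Type*} [NormedAddCommGroup E] (M : ℕ) (u : Fin M → E) (c : ℝ) (hc : 0 ≤ c)
    (h : ∀ m, ‖u m‖ ^ 2 ≤ c) : ‖∑ m, u m‖ ^ 2 ≤ (M : ℝ) ^ 2 * c := by
  have h1 : ‖∑ m, u m‖ ≤ M * √c := by
    calc _ ≤ ∑ m, ‖u m‖ := norm_sum_le _ _
      _ ≤ ∑ _m : Fin M, √c := Finset.sum_le_sum fun m _ => Real.le_sqrt_of_sq_le (h m)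
      _ = _ := by simp
  calc _ ≤ (M * √c) ^ 2 := by gcongr
    _ = _ := by rw [mul_pow, Real.sq_sqrt hc]

/-- LAG descent lemma (Lemma 3) with the parameter choice `β₁ = (1 − αL)/(2α)`. -/
theorem lag_lyapunov_descent {n : ℕ}
    (M D : ℕ) (hM : 1 ≤ M) (hD : 1 ≤ D)
    (Lf : Fin M → EuclideanSpace ℝ (Fin n) → ℝ)
    (hdiff : ∀ m, Differentiable ℝ (Lf m))
    (L : ℝ) (hL : 0 < L)
    (hsmooth : ∀ x y, ‖gradient (fun z => ∑ m, Lf m z) x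
        - gradient (fun z => ∑ m, Lf m z) y‖ ≤ L * ‖x - y‖)
    (α : ℝ) (hα : 0 < α) (hαL : α ≤ 1 / L)
    (ξ : ℕ → ℝ) (hξ : ∀ d ∈ Finset.Icc 1 D, 0 ≤ ξ d)
    (θ : ℤ → EuclideanSpace ℝ (Fin n))
    (hpast : ∀ k : ℤ, k ≤ 1 → θ k = θ 1)
    (Mc : ℤ → Finset (Fin M))
    (θhat : ℤ → Fin M → EuclideanSpace ℝ (Fin n))
    (hhat0 : ∀ m, θhat 0 m = θ 1)
    (hhat : ∀ k : ℤ, 1 ≤ k → ∀ m : Fin M,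
      (m ∈ Mc k → θhat k m = θhat (k - 1) m) ∧ (m ∉ Mc k → θhat k m = θ k))
    (hupd : ∀ k : ℤ, 1 ≤ k →
      θ (k + 1) = θ k - α • ∑ m, gradient (Lf m) (θhat k m))
    (htrig : ∀ k : ℤ, 1 ≤ k → ∀ m ∈ Mc k,
      ‖gradient (Lf m) (θhat k m) - gradient (Lf m) (θ k)‖ ^ 2
        ≤ (1 / (α ^ 2 * (M : ℝ) ^ 2)) *
            ∑ d ∈ Finset.Icc 1 D, ξ d * ‖θ (k + 1 - (d : ℤ)) - θ (k - (d : ℤ))‖ ^ 2)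
    (β : ℕ → ℝ) (hβ : ∀ d ∈ Finset.Icc 1 D, 0 ≤ β d) (hβD : β (D + 1) = 0)
    (hβ1 : β 1 = (1 - α * L) / (2 * α))
    (Lstar : ℝ)
    (V : ℤ → ℝ)
    (hV : ∀ k : ℤ, V k = (∑ m, Lf m (θ k)) - Lstar
      + ∑ d ∈ Finset.Icc 1 D, β d * ‖θ (k + 1 - (d : ℤ)) - θ (k - (d : ℤ))‖ ^ 2) :
    (∀ k : ℤ, 1 ≤ k →
      V (k + 1) - V k ≤ -(α / 2) * ‖gradient (fun z => ∑ m, Lf m z) (θ k)‖ ^ 2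
        - ∑ d ∈ Finset.Icc 1 D,
            (β d - β (d + 1) - ξ d / (2 * α)) * ‖θ (k + 1 - (d : ℤ)) - θ (k - (d : ℤ))‖ ^ 2)
    ∧ ((∀ d ∈ Finset.Icc 1 D, ξ d ≤ 2 * α * (β d - β (d + 1))) →
        ∀ k : ℤ, 1 ≤ k → V (k + 1) ≤ V k) := by
  have main : ∀ k : ℤ, 1 ≤ k →
      V (k + 1) - V k ≤ -(α / 2) * ‖gradient (fun z => ∑ m, Lf m z) (θ k)‖ ^ 2
        - ∑ d ∈ Finset.Icc 1 D,
            (β d - β (d + 1) - ξ d / (2 * α)) *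
              ‖θ (k + 1 - (d : ℤ)) - θ (k - (d : ℤ))‖ ^ 2 := by
    intro k hk
    have hf : Differentiable ℝ (fun z => ∑ m, Lf m z) := by fun_prop
    have hg : gradient (fun z => ∑ m, Lf m z) (θ k) = ∑ m, gradient (Lf m) (θ k) := by
      unfold gradient
      rw [fderiv_fun_sum (fun m _ => (hdiff m) _), map_sum]
    set s := ∑ m, gradient (Lf m) (θhat k m) with hs
    set g := gradient (fun z => ∑ m, Lf m z) (θ k) with hgdef
    set T := ∑ d ∈ Finset.Icc 1 D, ξ d * ‖θ (k + 1 - (d : ℤ)) - θ (k - (d : ℤ))‖ ^ 2 with hT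
    have hT0 : 0 ≤ T := Finset.sum_nonneg fun d hd => mul_nonneg (hξ d hd) (by positivity)
    have hM0 : (0 : ℝ) < M := by exact_mod_cast hM
    have herr : ‖s - g‖ ^ 2 ≤ T / α ^ 2 := by
      have h := aux_err M (fun m => gradient (Lf m) (θhat k m) - gradient (Lf m) (θ k))
        ((1 / (α ^ 2 * (M : ℝ) ^ 2)) * T) (by positivity) (by
          intro m
          by_cases hm : m ∈ Mc k
          · exact htrig k hk m hm
          · simp only [(hhat k hk m).2 hm, sub_self, norm_zero]
            rw [zero_pow two_ne_zero]
            positivity)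
      rw [Finset.sum_sub_distrib, ← hg] at h
      refine h.trans (le_of_eq ?_)
      field_simp
    have hdesc := aux_descent _ hf L hsmooth (θ k) (-(α • s))
    rw [← sub_eq_add_neg, ← hupd k hk, norm_neg, norm_smul, Real.norm_of_nonneg hα.le,
      inner_neg_right, real_inner_smul_right, ← hgdef] at hdesc
    have hns := norm_sub_sq_real s g
    rw [real_inner_comm] at hns
    have hsh := aux_shift D β (fun d => ‖θ (k + 1 - (d : ℤ)) - θ (k - (d : ℤ))‖ ^ 2)
    have hsum : ∑ d ∈ Finset.Icc 1 D, β d * ‖θ (k + 1 + 1 - (d : ℤ)) - θ (k + 1 - (d : ℤ))‖ ^ 2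
        = β 1 * (α * ‖s‖) ^ 2 + ∑ d ∈ Finset.Icc 1 D,
          β (d + 1) * ‖θ (k + 1 - (d : ℤ)) - θ (k - (d : ℤ))‖ ^ 2 := by
      have h0 : ‖θ (k + 1) - θ k‖ = α * ‖s‖ := by
        rw [hupd k hk, sub_sub_cancel_left, norm_neg, norm_smul, Real.norm_of_nonneg hα.le]
      simp only [hβD, zero_mul, add_zero, Nat.cast_zero, sub_zero, h0] at hsh
      rw [← hsh]
      refine Finset.sum_congr rfl fun d hd => ?_
      have hd1 := (Finset.mem_Icc.1 hd).1
      rw [Nat.cast_sub hd1]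
      congr 5 <;> push_cast <;> ring_nf
    have hsplit : ∑ d ∈ Finset.Icc 1 D, (β d - β (d + 1) - ξ d / (2 * α)) *
              ‖θ (k + 1 - (d : ℤ)) - θ (k - (d : ℤ))‖ ^ 2
        = ∑ d ∈ Finset.Icc 1 D, β d * ‖θ (k + 1 - (d : ℤ)) - θ (k - (d : ℤ))‖ ^ 2
          - ∑ d ∈ Finset.Icc 1 D, β (d + 1) * ‖θ (k + 1 - (d : ℤ)) - θ (k - (d : ℤ))‖ ^ 2
          - T / (2 * α) := by
      rw [hT, Finset.sum_div, ← Finset.sum_sub_distrib, ← Finset.sum_sub_distrib]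
      refine Finset.sum_congr rfl fun d _ => ?_
      ring
    rw [hV, hV, hsum, hsplit]
    have hb : β 1 * (α * ‖s‖) ^ 2 = α / 2 * ‖s‖ ^ 2 - L / 2 * (α * ‖s‖) ^ 2 := by
      rw [hβ1]; field_simp
    have he : α / 2 * ‖s - g‖ ^ 2 ≤ T / (2 * α) := by
      calc _ ≤ α / 2 * (T / α ^ 2) := by gcongr
        _ = _ := by field_simp
    rw [hns] at he
    rw [hb]
    linarith
  refine ⟨main, fun h k hk => ?_⟩
  have h1 := main k hk
  have h2 : 0 ≤ ∑ d ∈ Finset.Icc 1 D, (β d - β (d + 1) - ξ d / (2 * α)) *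
              ‖θ (k + 1 - (d : ℤ)) - θ (k - (d : ℤ))‖ ^ 2 := by
    refine Finset.sum_nonneg fun d hd => mul_nonneg ?_ (by positivity)
    rw [sub_nonneg, div_le_iff₀ (by positivity)]
    linarith [h d hd]
  have h3 : 0 ≤ α / 2 * ‖gradient (fun z => ∑ m, Lf m z) (θ k)‖ ^ 2 := by positivity
  linarith
end

section
/- Let E be the Euclidean space ℝ^n, let θ : ℤ → E be any sequence, let α > 0, let M ≥ 1 and D ≥ 1 be integers, and let ξ_1 ≥ ξ_2 ≥ … ≥ ξ_D ≥ 0 be reals. Let L_m : E → ℝ be differentiable with ∇L_m being C_m-Lipschitz (C_m ≥ 0), and suppose integers d, d', k satisfy 1 ≤ d' ≤ d ≤ D and C_m² ≤ ξ_d/(d α² M²). Then ‖∇L_m(θ^{k−d'}) − ∇L_m(θ^k)‖² ≤ C_m² ‖θ^{k−d'} − θ^k‖² ≤ (1/(α²M²)) Σ_{b=1}^D ξ_b ‖θ^{k+1−b} − θ^{k−b}‖². -/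
open Finset

/-- Core of Lemma 4 (lazy communication): a worker with small smoothness constant
whose stale copy is `θ^{k−d'}` satisfies both trigger conditions at iteration `k`. -/
theorem lazy_communication_trigger {n : ℕ}
    (θ : ℤ → EuclideanSpace ℝ (Fin n))
    (α : ℝ) (hα : 0 < α)
    (M D : ℕ) (hM : 1 ≤ M) (hD : 1 ≤ D)
    (ξ : ℕ → ℝ)
    (hξmono : ∀ d : ℕ, 1 ≤ d → d < D → ξ (d + 1) ≤ ξ d)
    (hξD : 0 ≤ ξ D)
    (Lm : EuclideanSpace ℝ (Fin n) → ℝ) (hdiff : Differentiable ℝ Lm)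
    (C : ℝ) (hC : 0 ≤ C)
    (hlip : ∀ x y, ‖gradient Lm x - gradient Lm y‖ ≤ C * ‖x - y‖)
    (d d' : ℕ) (k : ℤ) (hd'1 : 1 ≤ d') (hd'd : d' ≤ d) (hdD : d ≤ D)
    (hCd : C ^ 2 ≤ ξ d / ((d : ℝ) * α ^ 2 * (M : ℝ) ^ 2)) :
    ‖gradient Lm (θ (k - (d' : ℤ))) - gradient Lm (θ k)‖ ^ 2
        ≤ C ^ 2 * ‖θ (k - (d' : ℤ)) - θ k‖ ^ 2
    ∧ C ^ 2 * ‖θ (k - (d' : ℤ)) - θ k‖ ^ 2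
        ≤ (1 / (α ^ 2 * (M : ℝ) ^ 2)) *
            ∑ b ∈ Finset.Icc 1 D, ξ b * ‖θ (k + 1 - (b : ℤ)) - θ (k - (b : ℤ))‖ ^ 2 := by
  have hmono : ∀ a b : ℕ, 1 ≤ a → a ≤ b → b ≤ D → ξ b ≤ ξ a := by
    intro a b ha hab
    induction b, hab using Nat.le_induction with
    | base => intro _; exact le_rfl
    | succ b hb ih =>
      intro hbD
      exact (hξmono b (by omega) (by omega)).trans (ih (by omega))
  have hnn : ∀ b : ℕ, 1 ≤ b → b ≤ D → 0 ≤ ξ b := fun b h1 h2 =>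
    hξD.trans (hmono b D h1 h2 le_rfl)
  have htri : ∀ e : ℕ, ‖θ (k - (e : ℤ)) - θ k‖
      ≤ ∑ b ∈ Finset.Icc 1 e, ‖θ (k + 1 - (b : ℤ)) - θ (k - (b : ℤ))‖ := by
    intro e
    induction e with
    | zero => simp
    | succ e ih =>
      rw [Finset.sum_Icc_succ_top (by omega)]
      have h1 : k + 1 - ((e + 1 : ℕ) : ℤ) = k - (e : ℤ) := by push_cast; ring
      rw [h1]
      have h2 := norm_sub_le_norm_sub_add_norm_sub
        (θ (k - ((e + 1 : ℕ) : ℤ))) (θ (k - (e : ℤ))) (θ k)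
      rw [norm_sub_rev (θ (k - ((e + 1 : ℕ) : ℤ))) (θ (k - (e : ℤ)))] at h2
      linarith
  constructor
  · rw [← mul_pow]
    exact pow_le_pow_left₀ (norm_nonneg _) (hlip _ _) 2
  · have hdpos : (0 : ℝ) < d := by exact_mod_cast (by omega : 0 < d)
    have hMpos : (0 : ℝ) < M := by exact_mod_cast (by omega : 0 < M)
    have hd'le : (d' : ℝ) ≤ d := by exact_mod_cast hd'd
    have hξd : 0 ≤ ξ d := hnn d (by omega) hdD
    have hsq : ‖θ (k - (d' : ℤ)) - θ k‖ ^ 2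
        ≤ d * ∑ b ∈ Finset.Icc 1 d', ‖θ (k + 1 - (b : ℤ)) - θ (k - (b : ℤ))‖ ^ 2 := by
      refine (pow_le_pow_left₀ (norm_nonneg _) (htri d') 2).trans ?_
      refine sq_sum_le_card_mul_sum_sq.trans ?_
      rw [Nat.card_Icc, Nat.add_sub_cancel]
      exact mul_le_mul_of_nonneg_right hd'le (Finset.sum_nonneg fun _ _ => sq_nonneg _)
    have hsum : ξ d * ∑ b ∈ Finset.Icc 1 d', ‖θ (k + 1 - (b : ℤ)) - θ (k - (b : ℤ))‖ ^ 2
        ≤ ∑ b ∈ Finset.Icc 1 D, ξ b * ‖θ (k + 1 - (b : ℤ)) - θ (k - (b : ℤ))‖ ^ 2 := by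
      rw [Finset.mul_sum]
      refine (Finset.sum_le_sum fun b hb => ?_).trans
        (Finset.sum_le_sum_of_subset_of_nonneg
          (Finset.Icc_subset_Icc_right (hd'd.trans hdD)) fun b hb _ => ?_)
      · rw [Finset.mem_Icc] at hb
        exact mul_le_mul_of_nonneg_right (hmono b d hb.1 (by omega) hdD) (sq_nonneg _)
      · rw [Finset.mem_Icc] at hb
        exact mul_nonneg (hnn b hb.1 hb.2) (sq_nonneg _)
    calc C ^ 2 * ‖θ (k - (d' : ℤ)) - θ k‖ ^ 2
        ≤ ξ d / ((d : ℝ) * α ^ 2 * (M : ℝ) ^ 2) *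
          (d * ∑ b ∈ Finset.Icc 1 d', ‖θ (k + 1 - (b : ℤ)) - θ (k - (b : ℤ))‖ ^ 2) :=
          mul_le_mul hCd hsq (sq_nonneg _) (by positivity)
      _ = (1 / (α ^ 2 * (M : ℝ) ^ 2)) *
          (ξ d * ∑ b ∈ Finset.Icc 1 d', ‖θ (k + 1 - (b : ℤ)) - θ (k - (b : ℤ))‖ ^ 2) := by
          field_simp
      _ ≤ _ := mul_le_mul_of_nonneg_left hsum (by positivity)
end

section
/- Let M ≥ 1 and D ≥ 1 be integers, let I ≥ 0 be a real number, let γ_1 ≥ γ_2 ≥ … ≥ γ_D be real numbers, and let H : {1, …, M} → ℝ and c : {1, …, M} → ℝ satisfy: 0 ≤ c_m ≤ I for all m, and c_m ≤ I/(d + 1) for every m and d ∈ {1, …, D} with H(m)² ≤ γ_d. Define h(γ) := |{m ∈ {1, …, M} : H(m)² ≤ γ}| / M. Then Σ_{m=1}^M c_m ≤ (1 − Σ_{d=1}^D (1/d − 1/(d+1)) h(γ_d)) · M · I. -/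
open Finset

lemma lag_weights_le (p : ℕ → Prop) [DecidablePred p] (n : ℕ) :
    ∑ d ∈ Finset.Icc 1 n, (1 / (d : ℝ) - 1 / ((d : ℝ) + 1)) * (if p d then (1 : ℝ) else 0)
      ≤ 1 - 1 / ((n : ℝ) + 1) := by
  induction n with
  | zero => simp
  | succ n ih =>
    rw [Finset.sum_Icc_succ_top (by omega)]
    push_cast
    have h : (0 : ℝ) ≤ 1 / ((n : ℝ) + 1) - 1 / ((n : ℝ) + 1 + 1) := by
      rw [sub_nonneg]
      apply one_div_le_one_div_of_le <;> first | positivity | linarith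
    split_ifs <;> linarith

lemma lag_worker_bound (p : ℕ → Prop) [DecidablePred p] (I x : ℝ) (hI : 0 ≤ I) (hx : x ≤ I)
    (n : ℕ) (h : ∀ d ∈ Finset.Icc 1 n, p d → x ≤ I / ((d : ℝ) + 1)) :
    x ≤ (1 - ∑ d ∈ Finset.Icc 1 n,
      (1 / (d : ℝ) - 1 / ((d : ℝ) + 1)) * (if p d then (1 : ℝ) else 0)) * I := by
  induction n with
  | zero => simpa using hx
  | succ n ih =>
    by_cases hp : p (n + 1)
    · have h1 := h (n + 1) (by simp) hp
      have h2 := lag_weights_le p (n + 1)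
      refine h1.trans ?_
      rw [div_eq_mul_one_div, mul_comm]
      exact mul_le_mul_of_nonneg_right (by linarith) hI
    · rw [Finset.sum_Icc_succ_top (by omega), if_neg hp, mul_zero, add_zero]
      refine ih fun d hd => h d ?_
      simp only [Finset.mem_Icc] at hd ⊢
      omega

/-- Proposition 1 (communication complexity): the total number of communication
rounds is bounded by `(1 − ΔC̄(h; {γ_d})) · M · 𝕀`. -/
theorem lag_communication_complexity
    (M D : ℕ) (hM : 1 ≤ M) (hD : 1 ≤ D)
    (I : ℝ) (hI : 0 ≤ I)
    (γ : ℕ → ℝ)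
    (hγmono : ∀ d : ℕ, 1 ≤ d → d < D → γ (d + 1) ≤ γ d)
    (H c : Fin M → ℝ)
    (hc0 : ∀ m, 0 ≤ c m) (hcI : ∀ m, c m ≤ I)
    (hcd : ∀ m : Fin M, ∀ d ∈ Finset.Icc 1 D,
      H m ^ 2 ≤ γ d → c m ≤ I / ((d : ℝ) + 1)) :
    ∑ m, c m
      ≤ (1 - ∑ d ∈ Finset.Icc 1 D,
            (1 / (d : ℝ) - 1 / ((d : ℝ) + 1)) *
              (((Finset.univ.filter (fun m : Fin M => H m ^ 2 ≤ γ d)).card : ℝ) / (M : ℝ)))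
          * (M : ℝ) * I := by
  have hM0 : (M : ℝ) ≠ 0 := by
    have : 0 < M := hM
    positivity
  have key := Finset.sum_le_sum fun m (_ : m ∈ (Finset.univ : Finset (Fin M))) =>
    lag_worker_bound (fun d => H m ^ 2 ≤ γ d) I (c m) hI (hcI m) D (hcd m)
  refine key.trans (le_of_eq ?_)
  rw [← Finset.sum_mul, Finset.sum_sub_distrib, Finset.sum_comm, sub_mul 1, Finset.sum_mul]
  congr 2
  · simp
  · refine Finset.sum_congr rfl fun d _ => ?_
    rw [← Finset.mul_sum, Finset.sum_boole, mul_assoc, div_mul_cancel₀ _ hM0]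
end

section
/- Assume the LAG setup, and in addition: 𝓛 is convex with a global minimizer θ* and 𝓛* = 𝓛(θ*); 0 < α ≤ 1/L; β_1 = (1 − αL)/(2α); β_1 ≥ β_2 ≥ … ≥ β_D > 0; the constant c := min{α/2, min_{1≤d≤D} (β_d − β_{d+1} − ξ_d/(2α))/β_d} is strictly positive; and there is R > 0 such that ‖θ^k − θ*‖² + Σ_{d=1}^D β_d ‖θ^{k+1−d} − θ^{k−d}‖² ≤ R for all k ≥ 1. Then for every K ≥ 2, 𝓛(θ^K) − 𝓛(θ*) ≤ R / (c (K − 1)). -/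
open Finset

/-- Derivative of a function along a line. -/
lemma lag_line_deriv {E : Type*} [NormedAddCommGroup E] [InnerProductSpace ℝ E] [CompleteSpace E]
    (f : E → ℝ) (hf : Differentiable ℝ f) (x v : E) (t : ℝ) :
    HasDerivAt (fun s : ℝ => f (x + s • v)) (inner ℝ (gradient f (x + t • v)) v) t := by
  have h1 : HasDerivAt (fun s : ℝ => x + s • v) v t := by
    simpa using ((hasDerivAt_id t).smul_const v).const_add x
  have h2 := (hf (x + t • v)).hasGradientAt.hasFDerivAt
  have h3 := h2.comp_hasDerivAt t h1
  exact h3.congr_deriv (by simp)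

/-- The descent lemma. -/
lemma lag_descent {E : Type*} [NormedAddCommGroup E] [InnerProductSpace ℝ E] [CompleteSpace E]
    (f : E → ℝ) (hf : Differentiable ℝ f) (L : ℝ)
    (hs : ∀ x y, ‖gradient f x - gradient f y‖ ≤ L * ‖x - y‖) (x v : E) :
    f (x + v) ≤ f x + inner ℝ (gradient f x) v + L / 2 * ‖v‖ ^ 2 := by
  have hd : ∀ t : ℝ, HasDerivAt
      (fun s : ℝ => f (x + s • v) - s * inner ℝ (gradient f x) v - L / 2 * ‖v‖ ^ 2 * s ^ 2)
      (inner ℝ (gradient f (x + t • v)) v - inner ℝ (gradient f x) v - L * ‖v‖ ^ 2 * t) t := by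
    intro t
    have h1 := lag_line_deriv f hf x v t
    have h2 := (hasDerivAt_id t).mul_const (inner ℝ (gradient f x) v)
    have h3 := ((hasDerivAt_id t).pow 2).const_mul (L / 2 * ‖v‖ ^ 2)
    refine ((h1.sub h2).sub h3).congr_deriv ?_
    simp
    ring
  have hanti : AntitoneOn
      (fun s : ℝ => f (x + s • v) - s * inner ℝ (gradient f x) v - L / 2 * ‖v‖ ^ 2 * s ^ 2)
      (Set.Ici 0) := by
    apply antitoneOn_of_deriv_nonpos (convex_Ici 0)
    · exact fun t _ => (hd t).continuousAt.continuousWithinAt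
    · exact fun t _ => (hd t).differentiableAt.differentiableWithinAt
    · intro t ht
      rw [interior_Ici] at ht
      have ht0 : 0 < t := ht
      rw [(hd t).deriv, ← inner_sub_left]
      have h1 := real_inner_le_norm (gradient f (x + t • v) - gradient f x) v
      have h2 := hs (x + t • v) x
      rw [add_sub_cancel_left, norm_smul, Real.norm_of_nonneg ht0.le] at h2
      have h3 := mul_le_mul_of_nonneg_right h2 (norm_nonneg v)
      nlinarith
  have h := hanti (show (0 : ℝ) ∈ Set.Ici 0 by simp) (show (1 : ℝ) ∈ Set.Ici 0 by simp) zero_le_one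
  have h0 : x + (1 : ℝ) • v = x + v := by rw [one_smul]
  have h1 : x + (0 : ℝ) • v = x := by rw [zero_smul, add_zero]
  beta_reduce at h
  rw [h0, h1] at h
  linarith

/-- First-order convexity inequality. -/
lemma lag_first_order {E : Type*} [NormedAddCommGroup E] [InnerProductSpace ℝ E] [CompleteSpace E]
    (f : E → ℝ) (hf : Differentiable ℝ f) (hc : ConvexOn ℝ Set.univ f) (x y : E) :
    f x - f y ≤ ‖gradient f x‖ * ‖x - y‖ := by
  have h1 := hc.comp_affineMap (AffineMap.lineMap x y : ℝ →ᵃ[ℝ] E)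
  have h2 := lag_line_deriv f hf x (y - x) 0
  have he : (f ∘ (AffineMap.lineMap x y : ℝ →ᵃ[ℝ] E)) = fun s : ℝ => f (x + s • (y - x)) := by
    funext s
    simp [AffineMap.lineMap_apply, add_comm]
  rw [he] at h1
  have h3 := h1.le_slope_of_hasDerivAt (x := 0) (y := 1) (by simp) (by simp) zero_lt_one h2
  have e0 : x + (0 : ℝ) • (y - x) = x := by rw [zero_smul, add_zero]
  have e1 : x + (1 : ℝ) • (y - x) = y := by rw [one_smul, add_sub_cancel]
  rw [slope_def_field, e0, e1, sub_zero, div_one] at h3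
  have h4 := neg_le_of_abs_le (abs_real_inner_le_norm (gradient f x) (y - x))
  rw [norm_sub_rev x y]
  linarith

lemma lag_gradient_sum {E : Type*} [NormedAddCommGroup E] [InnerProductSpace ℝ E] [CompleteSpace E]
    {M : ℕ} (Lf : Fin M → E → ℝ) (hdiff : ∀ m, Differentiable ℝ (Lf m)) (x : E) :
    gradient (fun z => ∑ m, Lf m z) x = ∑ m, gradient (Lf m) x := by
  apply HasGradientAt.gradient
  rw [hasGradientAt_iff_hasFDerivAt, map_sum]
  exact HasFDerivAt.fun_sum fun m _ => (hdiff m x).hasGradientAt.hasFDerivAt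

lemma lag_sum_shift (f : ℕ → ℝ) (D : ℕ) :
    ∑ d ∈ Finset.Icc 1 D, f d + f (D + 1) = f 1 + ∑ d ∈ Finset.Icc 1 D, f (d + 1) := by
  induction D with
  | zero => simp
  | succ D ih =>
    rw [Finset.sum_Icc_succ_top (by omega), Finset.sum_Icc_succ_top (by omega), ih]
    ring

/-- Algebraic identity for the inexact gradient step. -/
lemma lag_inner_step {E : Type*} [NormedAddCommGroup E] [InnerProductSpace ℝ E]
    (g e : E) (α : ℝ) :
    inner ℝ g (-(α • (g + e)))
      = -(α / 2) * ‖g‖ ^ 2 - α / 2 * ‖g + e‖ ^ 2 + α / 2 * ‖e‖ ^ 2 := by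
  rw [inner_neg_right, inner_smul_right, inner_add_right, real_inner_self_eq_norm_sq,
    norm_add_sq_real]
  ring

lemma lag_rate_step (a N V V' : ℝ) (ha : 0 < a) (hN : 0 ≤ N) (hV : 0 ≤ V)
    (hstep : V' ≤ V - a * V ^ 2) (hbd : a * N * V ≤ 1) : a * (N + 1) * V' ≤ 1 := by
  have h1 : a * (N + 1) * V' ≤ a * (N + 1) * (V - a * V ^ 2) :=
    mul_le_mul_of_nonneg_left hstep (by positivity)
  have hx : 0 ≤ a * V := by positivity
  have h2 : a * (N + 1) * (V - a * V ^ 2) = (a * N * V + a * V) * (1 - a * V) := by ring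
  have h0 : 0 ≤ a * N * V := by positivity
  rcases le_total (a * V) 1 with h | h
  · nlinarith
  · nlinarith

/-- Theorem 2: the O(1/K) convergence of LAG in the convex case. -/
theorem lag_convex_convergence {n : ℕ}
    (M D : ℕ) (hM : 1 ≤ M) (hD : 1 ≤ D)
    (Lf : Fin M → EuclideanSpace ℝ (Fin n) → ℝ)
    (hdiff : ∀ m, Differentiable ℝ (Lf m))
    (L : ℝ) (hL : 0 < L)
    (hsmooth : ∀ x y, ‖gradient (fun z => ∑ m, Lf m z) x
        - gradient (fun z => ∑ m, Lf m z) y‖ ≤ L * ‖x - y‖)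
    (hconv : ConvexOn ℝ Set.univ (fun z => ∑ m, Lf m z))
    (θstar : EuclideanSpace ℝ (Fin n))
    (hmin : ∀ x, (∑ m, Lf m θstar) ≤ ∑ m, Lf m x)
    (α : ℝ) (hα : 0 < α) (hαL : α ≤ 1 / L)
    (ξ : ℕ → ℝ) (hξ : ∀ d ∈ Finset.Icc 1 D, 0 ≤ ξ d)
    (β : ℕ → ℝ) (hβ1 : β 1 = (1 - α * L) / (2 * α))
    (hβmono : ∀ d : ℕ, 1 ≤ d → d < D → β (d + 1) ≤ β d)
    (hβpos : ∀ d ∈ Finset.Icc 1 D, 0 < β d)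
    (hβD : β (D + 1) = 0)
    (c : ℝ)
    (hc_def : c = min (α / 2)
      ((Finset.Icc 1 D).inf' (Finset.nonempty_Icc.mpr hD)
        (fun d => (β d - β (d + 1) - ξ d / (2 * α)) / β d)))
    (hc : 0 < c)
    (θ : ℤ → EuclideanSpace ℝ (Fin n))
    (hpast : ∀ k : ℤ, k ≤ 1 → θ k = θ 1)
    (Mc : ℤ → Finset (Fin M))
    (θhat : ℤ → Fin M → EuclideanSpace ℝ (Fin n))
    (hhat0 : ∀ m, θhat 0 m = θ 1)
    (hhat : ∀ k : ℤ, 1 ≤ k → ∀ m : Fin M,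
      (m ∈ Mc k → θhat k m = θhat (k - 1) m) ∧ (m ∉ Mc k → θhat k m = θ k))
    (hupd : ∀ k : ℤ, 1 ≤ k →
      θ (k + 1) = θ k - α • ∑ m, gradient (Lf m) (θhat k m))
    (htrig : ∀ k : ℤ, 1 ≤ k → ∀ m ∈ Mc k,
      ‖gradient (Lf m) (θhat k m) - gradient (Lf m) (θ k)‖ ^ 2
        ≤ (1 / (α ^ 2 * (M : ℝ) ^ 2)) *
            ∑ d ∈ Finset.Icc 1 D, ξ d * ‖θ (k + 1 - (d : ℤ)) - θ (k - (d : ℤ))‖ ^ 2)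
    (R : ℝ) (hR : 0 < R)
    (hRbound : ∀ k : ℤ, 1 ≤ k →
      ‖θ k - θstar‖ ^ 2
        + ∑ d ∈ Finset.Icc 1 D, β d * ‖θ (k + 1 - (d : ℤ)) - θ (k - (d : ℤ))‖ ^ 2 ≤ R) :
    ∀ K : ℤ, 2 ≤ K →
      (∑ m, Lf m (θ K)) - (∑ m, Lf m θstar) ≤ R / (c * ((K : ℝ) - 1)) := by
  set F : EuclideanSpace ℝ (Fin n) → ℝ := fun z => ∑ m, Lf m z with hF
  have hFd : Differentiable ℝ F := by
    rw [hF]; exact Differentiable.fun_sum fun m _ => hdiff m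
  set δ : ℤ → ℕ → ℝ := fun k d => ‖θ (k + 1 - (d : ℤ)) - θ (k - (d : ℤ))‖ ^ 2 with hδ
  have hδ0 : ∀ k d, 0 ≤ δ k d := fun k d => by positivity
  have hδ1 : ∀ k, δ (k + 1) 1 = ‖θ (k + 1) - θ k‖ ^ 2 := by
    intro k
    simp only [hδ, Nat.cast_one, add_sub_cancel_right]
  have hδs : ∀ k d, δ (k + 1) (d + 1) = δ k d := by
    intro k d
    simp only [hδ]
    rw [show k + 1 + 1 - ((d + 1 : ℕ) : ℤ) = k + 1 - d by push_cast; ring,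
      show k + 1 - ((d + 1 : ℕ) : ℤ) = k - d by push_cast; ring]
  have hMpos : (0 : ℝ) < M := by exact_mod_cast hM
  set W : ℤ → ℝ := fun k => ∑ d ∈ Finset.Icc 1 D, β d * δ k d with hW
  have hW0 : ∀ k, 0 ≤ W k := fun k =>
    Finset.sum_nonneg fun d hd => mul_nonneg (hβpos d hd).le (hδ0 k d)
  set V : ℤ → ℝ := fun k => F (θ k) - F θstar + W k with hV
  have hgap : ∀ k, 0 ≤ F (θ k) - F θstar := fun k => sub_nonneg.mpr (hmin _)
  have hV0 : ∀ k, 0 ≤ V k := fun k => add_nonneg (hgap k) (hW0 k)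
  have hcα : c ≤ α / 2 := hc_def ▸ min_le_left _ _
  have hcd : ∀ d ∈ Finset.Icc 1 D, c * β d ≤ β d - β (d + 1) - ξ d / (2 * α) := by
    intro d hd
    have h : c ≤ (β d - β (d + 1) - ξ d / (2 * α)) / β d := by
      rw [hc_def]
      exact (min_le_right _ _).trans
        (Finset.inf'_le (fun d => (β d - β (d + 1) - ξ d / (2 * α)) / β d) hd)
    exact (le_div_iff₀ (hβpos d hd)).mp h
  -- one-step decrease of the Lyapunov function
  have hdec : ∀ k : ℤ, 1 ≤ k → V (k + 1) ≤ V k - c * (‖gradient F (θ k)‖ ^ 2 + W k) := by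
    intro k hk
    set g := gradient F (θ k) with hg
    set e := ∑ m, (gradient (Lf m) (θhat k m) - gradient (Lf m) (θ k)) with he
    have hge : ∑ m, gradient (Lf m) (θhat k m) = g + e := by
      rw [hg, hF, lag_gradient_sum Lf hdiff, he, ← Finset.sum_add_distrib]
      simp
    have hup : θ (k + 1) = θ k + -(α • (g + e)) := by
      rw [hupd k hk, hge, sub_eq_add_neg]
    set T := ∑ d ∈ Finset.Icc 1 D, ξ d * δ k d with hT
    have hT0 : 0 ≤ T := Finset.sum_nonneg fun d hd => mul_nonneg (hξ d hd) (hδ0 k d)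
    have hem : ∀ m, ‖gradient (Lf m) (θhat k m) - gradient (Lf m) (θ k)‖ ^ 2
        ≤ (1 / (α ^ 2 * (M : ℝ) ^ 2)) * T := by
      intro m
      by_cases hm : m ∈ Mc k
      · exact htrig k hk m hm
      · rw [(hhat k hk m).2 hm]
        rw [sub_self, norm_zero, zero_pow two_ne_zero]
        positivity
    have he2 : ‖e‖ ^ 2 ≤ (1 / α ^ 2) * T := by
      have h1 : ‖e‖ ≤ ∑ m, ‖gradient (Lf m) (θhat k m) - gradient (Lf m) (θ k)‖ :=
        norm_sum_le _ _
      have h2 : ‖e‖ ^ 2 ≤ (∑ m, ‖gradient (Lf m) (θhat k m) - gradient (Lf m) (θ k)‖) ^ 2 := by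
        gcongr
      refine h2.trans (sq_sum_le_card_mul_sum_sq.trans ?_)
      have h3 := Finset.sum_le_sum fun m (_ : m ∈ Finset.univ) => hem m
      simp only [Finset.sum_const, Finset.card_univ, Fintype.card_fin, nsmul_eq_mul] at h3 ⊢
      refine (mul_le_mul_of_nonneg_left h3 hMpos.le).trans (le_of_eq ?_)
      field_simp
    have hdesc := lag_descent F hFd L hsmooth (θ k) (-(α • (g + e)))
    rw [← hup, lag_inner_step] at hdesc
    have hnorm : ‖-(α • (g + e))‖ ^ 2 = α ^ 2 * ‖g + e‖ ^ 2 := by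
      rw [norm_neg, norm_smul, mul_pow, Real.norm_eq_abs, sq_abs]
    have hδge : δ (k + 1) 1 = α ^ 2 * ‖g + e‖ ^ 2 := by
      rw [hδ1, hup, add_sub_cancel_left, hnorm]
    have hshift : W (k + 1) = β 1 * δ (k + 1) 1 + ∑ d ∈ Finset.Icc 1 D, β (d + 1) * δ k d := by
      have h := lag_sum_shift (fun d => β d * δ (k + 1) d) D
      beta_reduce at h
      rw [hβD, zero_mul, add_zero] at h
      rw [← Finset.sum_congr rfl fun d _ => congrArg (β (d + 1) * ·) (hδs k d)]
      exact h
    have hb1 : β 1 * δ (k + 1) 1 = (α / 2 - L / 2 * α ^ 2) * ‖g + e‖ ^ 2 := by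
      rw [hδge, hβ1]; field_simp
    have hsum : c * W k ≤ W k - ∑ d ∈ Finset.Icc 1 D, β (d + 1) * δ k d - 1 / (2 * α) * T := by
      simp only [hW, hT, Finset.mul_sum, ← Finset.sum_sub_distrib]
      apply Finset.sum_le_sum
      intro d hd
      have := mul_le_mul_of_nonneg_right (hcd d hd) (hδ0 k d)
      calc c * (β d * δ k d) = c * β d * δ k d := by ring
        _ ≤ _ := this
        _ = _ := by ring
    have he3 : α / 2 * ‖e‖ ^ 2 ≤ 1 / (2 * α) * T := by
      refine (mul_le_mul_of_nonneg_left he2 (by positivity)).trans (le_of_eq ?_)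
      field_simp
    have hg2 : c * ‖g‖ ^ 2 ≤ α / 2 * ‖g‖ ^ 2 := by gcongr
    rw [hnorm] at hdesc
    simp only [hV]
    rw [hshift, hb1]
    nlinarith
  have hsq : ∀ k : ℤ, 1 ≤ k → V k ^ 2 ≤ R * (‖gradient F (θ k)‖ ^ 2 + W k) := by
    intro k hk
    have h1 := lag_first_order F hFd hconv (θ k) θstar
    have h2 : ‖θ k - θstar‖ ^ 2 + W k ≤ R := hRbound k hk
    have h3 : V k ≤ ‖gradient F (θ k)‖ * ‖θ k - θstar‖ + W k := by
      simp only [hV]; linarith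
    have h4 : V k ^ 2 ≤ (‖gradient F (θ k)‖ * ‖θ k - θstar‖ + W k) ^ 2 :=
      pow_le_pow_left₀ (hV0 k) h3 2
    have hw := hW0 k
    have h5 : (‖gradient F (θ k)‖ * ‖θ k - θstar‖ + W k) ^ 2
        ≤ (‖θ k - θstar‖ ^ 2 + W k) * (‖gradient F (θ k)‖ ^ 2 + W k) := by
      nlinarith [mul_nonneg hw (sq_nonneg (‖gradient F (θ k)‖ - ‖θ k - θstar‖))]
    exact h4.trans (h5.trans (mul_le_mul_of_nonneg_right h2 (by positivity)))
  have hstep : ∀ k : ℤ, 1 ≤ k → V (k + 1) ≤ V k - c / R * V k ^ 2 := by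
    intro k hk
    have h1 := hdec k hk
    have h2 := mul_le_mul_of_nonneg_left (hsq k hk) (show 0 ≤ c / R by positivity)
    have h3 : c / R * (R * (‖gradient F (θ k)‖ ^ 2 + W k))
        = c * (‖gradient F (θ k)‖ ^ 2 + W k) := by field_simp
    linarith
  have hrate : ∀ N : ℕ, c / R * N * V (N + 1) ≤ 1 := by
    intro N
    induction N with
    | zero => simp
    | succ N ih =>
      push_cast
      exact lag_rate_step (c / R) N _ _ (by positivity) (by positivity) (hV0 _)
        (hstep (N + 1) (by omega)) ih
  intro K hK
  obtain ⟨N, hN⟩ := Int.eq_ofNat_of_zero_le (show 0 ≤ K - 1 by omega)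
  have hKN : K = (N : ℤ) + 1 := by omega
  have hNpos : (0 : ℝ) < N := by
    have : 0 < N := by omega
    exact_mod_cast this
  have h := hrate N
  rw [← hKN] at h
  have hK1 : (K : ℝ) - 1 = N := by rw [hKN]; push_cast; ring
  rw [hK1, le_div_iff₀ (by positivity)]
  have hle : F (θ K) - F θstar ≤ V K := by
    have := hW0 K
    simp only [hV]; linarith
  have h' : c * N * V K ≤ R := by
    have e1 : c / R * N * V K = (c * N * V K) / R := by ring
    rw [e1, div_le_one hR] at h
    exact h
  calc (F (θ K) - F θstar) * (c * N) ≤ V K * (c * N) :=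
        mul_le_mul_of_nonneg_right hle (by positivity)
    _ = c * N * V K := by ring
    _ ≤ R := h'
end

section
/- Let a : ℕ → ℝ be a nonnegative summable sequence (Σ_{k=1}^∞ a_k < ∞). Then lim_{K→∞} K · min_{1 ≤ k ≤ K} a_k = 0. -/
/-- Summability implication (Lemma 3 of Davis–Yin): for a nonnegative summable
sequence, `K · min_{1 ≤ k ≤ K} a_k → 0`. -/
theorem summable_min_o_one_div
    (a : ℕ → ℝ) (ha : ∀ k, 0 ≤ a k) (hsum : Summable a) :
    Filter.Tendsto (fun K : ℕ => (K : ℝ) * sInf (a '' Set.Icc 1 K))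
      Filter.atTop (nhds 0) := by
  have hS := hsum.hasSum.tendsto_sum_nat
  have h1 : Filter.Tendsto (fun K : ℕ => K + 1) Filter.atTop Filter.atTop :=
    Filter.tendsto_add_atTop_nat 1
  have h2 : Filter.Tendsto (fun K : ℕ => K / 2 + 1) Filter.atTop Filter.atTop :=
    h1.comp (Nat.tendsto_div_const_atTop (by norm_num))
  have h3 := ((hS.comp h1).sub (hS.comp h2)).const_mul 2
  rw [sub_self, mul_zero] at h3
  refine squeeze_zero (fun K => ?_) (fun K => ?_) h3
  · refine mul_nonneg (Nat.cast_nonneg K) (Real.sInf_nonneg ?_)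
    rintro _ ⟨k, _, rfl⟩
    exact ha k
  · have hle : K / 2 + 1 ≤ K + 1 := by omega
    simp only [Function.comp]
    rw [← Finset.sum_Ico_eq_sub a hle]
    have hb : BddBelow (a '' Set.Icc 1 K) := by
      refine ⟨0, ?_⟩
      rintro _ ⟨k, _, rfl⟩
      exact ha k
    have hm : 0 ≤ sInf (a '' Set.Icc 1 K) := by
      refine Real.sInf_nonneg ?_
      rintro _ ⟨k, _, rfl⟩
      exact ha k
    have hc := Finset.card_nsmul_le_sum (Finset.Ico (K / 2 + 1) (K + 1)) a
      (sInf (a '' Set.Icc 1 K)) (by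
        intro k hk
        rw [Finset.mem_Ico] at hk
        exact csInf_le hb ⟨k, ⟨by omega, by omega⟩, rfl⟩)
    rw [Nat.card_Ico, nsmul_eq_mul] at hc
    have hK : (K : ℝ) ≤ 2 * ((K + 1 - (K / 2 + 1) : ℕ) : ℝ) := by
      have : K ≤ 2 * (K + 1 - (K / 2 + 1)) := by omega
      exact_mod_cast this
    have := mul_le_mul_of_nonneg_right hK hm
    linarith
end

section
/- Assume the LAG setup with ξ_1, …, ξ_D ≥ 0 satisfying Σ_{d=1}^D ξ_d < 1, stepsize α = (1 − Σ_{d=1}^D ξ_d)/L, constants β_d = (Σ_{j=d}^D ξ_j)/(2α) for d = 1, …, D, and arbitrary 𝓛* ∈ ℝ. Then for every k ≥ 1, V^{k+1} − V^k ≤ −(α/2) ‖∇𝓛(θ^k)‖². -/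
open Finset

lemma lag_descent_lemma {E : Type*} [NormedAddCommGroup E] [InnerProductSpace ℝ E]
    [CompleteSpace E] (f : E → ℝ) (hf : Differentiable ℝ f) (L : ℝ)
    (hs : ∀ x y, ‖gradient f x - gradient f y‖ ≤ L * ‖x - y‖) (x s : E) :
    f (x + s) ≤ f x + inner ℝ (gradient f x) s + L / 2 * ‖s‖ ^ 2 := by
  have hd : ∀ t : ℝ, HasDerivAt
      (fun t : ℝ => f (x + t • s) - t * inner ℝ (gradient f x) s - L / 2 * ‖s‖ ^ 2 * t ^ 2)
      (inner ℝ (gradient f (x + t • s)) s - inner ℝ (gradient f x) s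
        - L * ‖s‖ ^ 2 * t) t := by
    intro t
    have h1 : HasDerivAt (fun t : ℝ => x + t • s) s t := by
      simpa using ((hasDerivAt_id t).smul_const s).const_add x
    have h2 := (hf (x + t • s)).hasGradientAt.hasFDerivAt.comp_hasDerivAt t h1
    have h3 := (hasDerivAt_id t).mul_const (inner ℝ (gradient f x) s)
    have h4 := (hasDerivAt_pow 2 t).const_mul (L / 2 * ‖s‖ ^ 2)
    have h5 := (h2.sub h3).sub h4
    refine h5.congr_deriv ?_
    simp
    ring
  have hanti : AntitoneOn
      (fun t : ℝ => f (x + t • s) - t * inner ℝ (gradient f x) s - L / 2 * ‖s‖ ^ 2 * t ^ 2)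
      (Set.Ici 0) := by
    apply antitoneOn_of_deriv_nonpos (convex_Ici 0)
    · exact fun t _ => (hd t).continuousAt.continuousWithinAt
    · exact fun t _ => (hd t).differentiableAt.differentiableWithinAt
    · intro t ht
      rw [interior_Ici] at ht
      have ht : 0 < t := ht
      rw [(hd t).deriv, ← inner_sub_left]
      have h1 := real_inner_le_norm (gradient f (x + t • s) - gradient f x) s
      have h2 := hs (x + t • s) x
      rw [add_sub_cancel_left, norm_smul, Real.norm_of_nonneg ht.le] at h2
      have h3 := mul_le_mul_of_nonneg_right h2 (norm_nonneg s)
      nlinarith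
  have := hanti (Set.mem_Ici.2 le_rfl) (Set.mem_Ici.2 zero_le_one) zero_le_one
  simp only [one_smul, zero_smul, add_zero, one_mul, zero_mul, one_pow] at this
  linarith

lemma lag_abel (T a : ℕ → ℝ) (N : ℕ) :
    ∑ d ∈ Finset.Icc 1 N, T d * (a (d - 1) - a d)
      = T 1 * a 0 - ∑ d ∈ Finset.Icc 1 N, (T d - T (d + 1)) * a d - T (N + 1) * a N := by
  induction N with
  | zero => simp
  | succ N ih =>
    rw [Finset.sum_Icc_succ_top (by omega), Finset.sum_Icc_succ_top (by omega), ih]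
    simp only [Nat.add_sub_cancel]
    ring


/-- Key descent inequality in the proof of Proposition 2:
with `α = (1 − Σ_d ξ_d)/L` and `β_d = (Σ_{j=d}^D ξ_j)/(2α)`,
`V^{k+1} − V^k ≤ −(α/2) ‖∇𝓛(θ^k)‖²`. -/
theorem lag_nonconvex_descent {n : ℕ}
    (M D : ℕ) (hM : 1 ≤ M) (hD : 1 ≤ D)
    (Lf : Fin M → EuclideanSpace ℝ (Fin n) → ℝ)
    (hdiff : ∀ m, Differentiable ℝ (Lf m))
    (L : ℝ) (hL : 0 < L)
    (hsmooth : ∀ x y, ‖gradient (fun z => ∑ m, Lf m z) x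
        - gradient (fun z => ∑ m, Lf m z) y‖ ≤ L * ‖x - y‖)
    (ξ : ℕ → ℝ) (hξ : ∀ d ∈ Finset.Icc 1 D, 0 ≤ ξ d)
    (hξsum : ∑ d ∈ Finset.Icc 1 D, ξ d < 1)
    (α : ℝ) (hα : α = (1 - ∑ d ∈ Finset.Icc 1 D, ξ d) / L)
    (β : ℕ → ℝ)
    (hβ : ∀ d ∈ Finset.Icc 1 D, β d = (∑ j ∈ Finset.Icc d D, ξ j) / (2 * α))
    (Lstar : ℝ)
    (θ : ℤ → EuclideanSpace ℝ (Fin n))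
    (hpast : ∀ k : ℤ, k ≤ 1 → θ k = θ 1)
    (Mc : ℤ → Finset (Fin M))
    (θhat : ℤ → Fin M → EuclideanSpace ℝ (Fin n))
    (hhat0 : ∀ m, θhat 0 m = θ 1)
    (hhat : ∀ k : ℤ, 1 ≤ k → ∀ m : Fin M,
      (m ∈ Mc k → θhat k m = θhat (k - 1) m) ∧ (m ∉ Mc k → θhat k m = θ k))
    (hupd : ∀ k : ℤ, 1 ≤ k →
      θ (k + 1) = θ k - α • ∑ m, gradient (Lf m) (θhat k m))
    (htrig : ∀ k : ℤ, 1 ≤ k → ∀ m ∈ Mc k,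
      ‖gradient (Lf m) (θhat k m) - gradient (Lf m) (θ k)‖ ^ 2
        ≤ (1 / (α ^ 2 * (M : ℝ) ^ 2)) *
            ∑ d ∈ Finset.Icc 1 D, ξ d * ‖θ (k + 1 - (d : ℤ)) - θ (k - (d : ℤ))‖ ^ 2)
    (V : ℤ → ℝ)
    (hV : ∀ k : ℤ, V k = (∑ m, Lf m (θ k)) - Lstar
      + ∑ d ∈ Finset.Icc 1 D, β d * ‖θ (k + 1 - (d : ℤ)) - θ (k - (d : ℤ))‖ ^ 2) :
    ∀ k : ℤ, 1 ≤ k →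
      V (k + 1) - V k ≤ -(α / 2) * ‖gradient (fun z => ∑ m, Lf m z) (θ k)‖ ^ 2 := by
  intro k hk
  have hαpos : 0 < α := by rw [hα]; exact div_pos (by linarith) hL
  have hLα : L * α = 1 - ∑ d ∈ Finset.Icc 1 D, ξ d := by rw [hα]; field_simp
  have hM0 : (0 : ℝ) < M := by exact_mod_cast hM
  set S := ∑ d ∈ Finset.Icc 1 D, ξ d with hS
  set F : EuclideanSpace ℝ (Fin n) → ℝ := fun z => ∑ m, Lf m z with hF
  have hFd : Differentiable ℝ F := by
    intro z
    exact DifferentiableAt.fun_sum fun m _ => hdiff m z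
  have hgrad : gradient F (θ k) = ∑ m, gradient (Lf m) (θ k) := by
    apply HasGradientAt.gradient
    rw [hasGradientAt_iff_hasFDerivAt, map_sum]
    exact HasFDerivAt.fun_sum fun m _ => (hdiff m (θ k)).hasGradientAt.hasFDerivAt
  set R := ∑ d ∈ Finset.Icc 1 D, ξ d * ‖θ (k + 1 - (d : ℤ)) - θ (k - (d : ℤ))‖ ^ 2 with hR
  have hR0 : 0 ≤ R := Finset.sum_nonneg fun d hd => mul_nonneg (hξ d hd) (sq_nonneg _)
  set g := gradient F (θ k) with hg
  set G := ∑ m, gradient (Lf m) (θhat k m) with hG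
  have hδ : α ^ 2 * ‖G - g‖ ^ 2 ≤ R := by
    have h1 : ∀ m, ‖gradient (Lf m) (θhat k m) - gradient (Lf m) (θ k)‖ ^ 2
        ≤ (1 / (α ^ 2 * (M : ℝ) ^ 2)) * R := by
      intro m
      by_cases hm : m ∈ Mc k
      · exact htrig k hk m hm
      · rw [(hhat k hk m).2 hm]
        simp only [sub_self, norm_zero]
        have : 0 ≤ 1 / (α ^ 2 * (M : ℝ) ^ 2) * R := by positivity
        simpa using this
    have h2 : ‖G - g‖ ≤ ∑ m, ‖gradient (Lf m) (θhat k m) - gradient (Lf m) (θ k)‖ := by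
      rw [hgrad, hG, ← Finset.sum_sub_distrib]
      exact norm_sum_le _ _
    have h3 := pow_le_pow_left₀ (norm_nonneg _) h2 2
    have h4 := sq_sum_le_card_mul_sum_sq (s := (Finset.univ : Finset (Fin M)))
      (f := fun m => ‖gradient (Lf m) (θhat k m) - gradient (Lf m) (θ k)‖)
    have h5 := Finset.sum_le_sum fun m (_ : m ∈ (Finset.univ : Finset (Fin M))) => h1 m
    simp only [Finset.sum_const, Finset.card_univ, Fintype.card_fin, nsmul_eq_mul] at h4 h5
    have h6 := mul_le_mul_of_nonneg_left h5 hM0.le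
    have h7 : ‖G - g‖ ^ 2 ≤ (M : ℝ) * (M * (1 / (α ^ 2 * (M : ℝ) ^ 2) * R)) := by linarith
    have h8 := mul_le_mul_of_nonneg_left h7 (sq_nonneg α)
    refine h8.trans (le_of_eq ?_)
    field_simp
  have hdesc := lag_descent_lemma F hFd L hsmooth (θ k) (-(α • G))
  rw [← sub_eq_add_neg, ← hupd k hk] at hdesc
  rw [inner_neg_right, inner_smul_right, norm_neg, norm_smul, Real.norm_of_nonneg hαpos.le,
    ← hg] at hdesc
  have hexp := norm_sub_sq_real G g
  rw [real_inner_comm] at hexp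
  -- telescoping
  have hsum : (∑ d ∈ Finset.Icc 1 D,
        β d * ‖θ (k + 1 + 1 - (d : ℤ)) - θ (k + 1 - (d : ℤ))‖ ^ 2)
      - ∑ d ∈ Finset.Icc 1 D, β d * ‖θ (k + 1 - (d : ℤ)) - θ (k - (d : ℤ))‖ ^ 2
      = (S * (α * ‖G‖) ^ 2 - R) / (2 * α) := by
    have hab := lag_abel (fun d => ∑ j ∈ Finset.Icc d D, ξ j)
      (fun d => ‖θ (k + 1 - (d : ℤ)) - θ (k - (d : ℤ))‖ ^ 2) D
    have e1 : ∑ d ∈ Finset.Icc 1 D, ((∑ j ∈ Finset.Icc d D, ξ j)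
        - ∑ j ∈ Finset.Icc (d + 1) D, ξ j) * ‖θ (k + 1 - (d : ℤ)) - θ (k - (d : ℤ))‖ ^ 2 = R := by
      refine Finset.sum_congr rfl fun d hd => ?_
      rw [← Finset.add_sum_Ioc_eq_sum_Icc (Finset.mem_Icc.1 hd).2]
      have : Finset.Icc (d + 1) D = Finset.Ioc d D := by ext; simp
      rw [this]
      ring
    have e2 : ‖θ (k + 1 - ((0 : ℕ) : ℤ)) - θ (k - ((0 : ℕ) : ℤ))‖ ^ 2 = (α * ‖G‖) ^ 2 := by
      simp only [Nat.cast_zero, sub_zero]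
      rw [hupd k hk, ← hG, sub_sub_cancel_left, norm_neg, norm_smul,
        Real.norm_of_nonneg hαpos.le]
    rw [e1, e2, Finset.Icc_eq_empty (by omega : ¬ D + 1 ≤ D), Finset.sum_empty, zero_mul,
      sub_zero, ← hS] at hab
    rw [← hab, Finset.sum_div, ← Finset.sum_sub_distrib]
    refine Finset.sum_congr rfl fun d hd => ?_
    rw [hβ d hd]
    have hd1 := (Finset.mem_Icc.1 hd).1
    have c1 : k + 1 - ((d - 1 : ℕ) : ℤ) = k + 1 + 1 - d := by omega
    have c2 : k - ((d - 1 : ℕ) : ℤ) = k + 1 - d := by omega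
    rw [c1, c2]
    ring
  rw [hV, hV]
  have hF1 : ∑ m, Lf m (θ (k + 1)) = F (θ (k + 1)) := rfl
  have hF2 : ∑ m, Lf m (θ k) = F (θ k) := rfl
  rw [hF1, hF2]
  have hδ2 : α / 2 * ‖G - g‖ ^ 2 ≤ R / (2 * α) := by
    rw [le_div_iff₀ (by positivity)]
    linarith
  have hsplit : (S * (α * ‖G‖) ^ 2 - R) / (2 * α)
      = (1 - L * α) * α / 2 * ‖G‖ ^ 2 - R / (2 * α) := by
    rw [hLα]; field_simp; ring
  rw [hsplit] at hsum
  rw [hexp] at hδ2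
  linarith
end
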